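/- (Proposition: fractional Jacobi differentiator.) Let a < b be reals, h = b−a, let y : ℝ → ℝ be continuous on [a,b], let N ∈ ℕ, μ, κ > −1 real, α ≥ 0 real, and l ∈ ℕ with l ≥ 1 and l−1 ≤ α < l. Define the truncated Jacobi series D^{(0)}(t) = Σ_{i=0}^{N} (⟨P_i^{(μ,κ)}, y(a+h·)⟩_{μ,κ} / ‖P_i^{(μ,κ)}‖²_{μ,κ}) · P_i^{(μ,κ)}(t). Then for every t ∈ (0,1], h^{−α} times the Riemann–Liouville fractional derivative of order α of D^{(0)} at t equals h^{−α} · ∫_0^1 Q_{μ,κ,α,N}(τ,t) · y(a+hτ) dτ, where Q_{μ,κ,α,N}(τ,t) = Σ_{i=0}^{N} w_{μ,κ}(τ) · (P_i^{(μ,κ)}(τ)/‖P_i^{(μ,κ)}‖²_{μ,κ}) · q_{μ,κ,i}(t), and q_{μ,κ,i}(t) = Σ_{j=0}^{i} Σ_{m=0}^{i−j} c_{μ,κ,i,j,m} · (Γ(i−m+1)/Γ(i−m+1−α)) · t^{i−m−α} with c_{μ,κ,i,j,m} = (−1)^m · C(i+μ, j) · C(i+κ, i−j) · C(i−j, m).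 -/

import Mathlib

/-- Generalized binomial coefficient `C(x, k) = Γ(x+1)/(Γ(k+1)·Γ(x−k+1))`. -/
noncomputable def genBinom (x : ℝ) (k : ℕ) : ℝ :=
  Real.Gamma (x + 1) / (Real.Gamma ((k : ℝ) + 1) * Real.Gamma (x - (k : ℝ) + 1))

/-- The `n`-th Jacobi orthogonal polynomial on `[0,1]`. -/
noncomputable def jacobiP (μ κ : ℝ) (n : ℕ) (t : ℝ) : ℝ :=
  ∑ j ∈ Finset.range (n + 1),
    genBinom ((n : ℝ) + μ) j * genBinom ((n : ℝ) + κ) (n - j) * (t - 1) ^ (n - j) * t ^ j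

/-- The weight function `w_{μ,κ}(t) = (1−t)^μ t^κ` on `[0,1]`. -/
noncomputable def jacobiWeight (μ κ t : ℝ) : ℝ := (1 - t) ^ μ * t ^ κ

/-- The weighted scalar product `⟨f, g⟩_{μ,κ} = ∫_0^1 w_{μ,κ}(t) f(t) g(t) dt`. -/
noncomputable def scalarProd (μ κ : ℝ) (f g : ℝ → ℝ) : ℝ :=
  ∫ t in (0:ℝ)..1, jacobiWeight μ κ t * f t * g t

/-- The squared weighted L² norm `‖f‖²_{μ,κ} = ⟨f, f⟩_{μ,κ}`. -/
noncomputable def normSq (μ κ : ℝ) (f : ℝ → ℝ) : ℝ := scalarProd μ κ f f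

/-- The Riemann–Liouville fractional derivative of order `α` (with `l - 1 ≤ α < l`)
of `f` at `x`. -/
noncomputable def rlDeriv (α : ℝ) (l : ℕ) (f : ℝ → ℝ) (x : ℝ) : ℝ :=
  (1 / Real.Gamma ((l : ℝ) - α)) *
    iteratedDeriv l (fun u => ∫ τ in (0:ℝ)..u, (u - τ) ^ ((l : ℝ) - α - 1) * f τ) x

/-- `q_{μ,κ,i}(t)` from the fractional Jacobi differentiator. -/
noncomputable def qPoly (μ κ α : ℝ) (i : ℕ) (t : ℝ) : ℝ :=
  ∑ j ∈ Finset.range (i + 1), ∑ m ∈ Finset.range (i - j + 1),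
    ((-1 : ℝ) ^ m * genBinom ((i : ℝ) + μ) j * genBinom ((i : ℝ) + κ) (i - j) *
        ((i - j).choose m : ℝ)) *
      (Real.Gamma ((i : ℝ) - (m : ℝ) + 1) / Real.Gamma ((i : ℝ) - (m : ℝ) + 1 - α)) *
      t ^ ((i : ℝ) - (m : ℝ) - α)

/-- The kernel `Q_{μ,κ,α,N}(τ, t)`. -/
noncomputable def jacobiKernel (μ κ α : ℝ) (N : ℕ) (τ t : ℝ) : ℝ :=
  ∑ i ∈ Finset.range (N + 1),
    jacobiWeight μ κ τ * (jacobiP μ κ i τ / normSq μ κ (jacobiP μ κ i)) * qPoly μ κ α i t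

/-!
By the Beta integral and `l`-fold differentiation, the Riemann–Liouville derivative of order `α`
takes `s ^ p` to `Γ(p + 1) / Γ(p + 1 - α) * t ^ (p - α)`. Expanding `(s - 1) ^ (i - j)` by the
binomial theorem writes `P_i` as a combination of the powers `s ^ (i - m)`, so its derivative is
`q_i`. What remains is linearity: of the fractional derivative in the Jacobi series, and of the
integral defining the Jacobi coefficients.
-/

open MeasureTheory Filter Topology

section Beta

variable {r s u : ℝ}

lemma ofReal_sub_rpow_mul_rpow {x : ℝ} (hx : 0 ≤ x) (hxu : x ≤ u) (r s : ℝ) :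
    (((u - x) ^ r * x ^ s : ℝ) : ℂ) =
      (x : ℂ) ^ (((s + 1 : ℝ) : ℂ) - 1) * ((u : ℂ) - x) ^ (((r + 1 : ℝ) : ℂ) - 1) := by
  rw [Complex.ofReal_mul, Complex.ofReal_cpow (sub_nonneg.2 hxu), Complex.ofReal_cpow hx, mul_comm]
  push_cast
  simp only [add_sub_cancel_right]

lemma intervalIntegrable_one_sub_rpow_mul_rpow (hr : -1 < r) (hs : -1 < s) :
    IntervalIntegrable (fun x : ℝ ↦ (1 - x) ^ r * x ^ s) volume 0 1 := by
  have hbeta := Complex.betaIntegral_convergent (u := ((s + 1 : ℝ) : ℂ)) (v := ((r + 1 : ℝ) : ℂ))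
    (by rw [Complex.ofReal_re]; linarith) (by rw [Complex.ofReal_re]; linarith)
  rw [intervalIntegrable_iff_integrableOn_Ioc_of_le zero_le_one] at hbeta ⊢
  refine IntegrableOn.congr_fun hbeta.re (fun x hx ↦ ?_) measurableSet_Ioc
  have hcast := ofReal_sub_rpow_mul_rpow hx.1.le hx.2 r s
  rw [Complex.ofReal_one] at hcast
  simp only [← hcast, RCLike.re_to_complex, Complex.ofReal_re]

lemma intervalIntegrable_sub_rpow_mul_rpow (hr : -1 < r) (hs : -1 < s) (hu : 0 < u) :
    IntervalIntegrable (fun x : ℝ ↦ (u - x) ^ r * x ^ s) volume 0 u := by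
  have hscaled := ((intervalIntegrable_one_sub_rpow_mul_rpow hr hs).comp_mul_left
    (c := u⁻¹)).const_mul (u ^ r * u ^ s)
  rw [zero_div, one_div, inv_inv] at hscaled
  refine hscaled.congr fun x hx ↦ ?_
  rw [Set.uIoc_of_le hu.le] at hx
  have hx_div : 0 ≤ u⁻¹ * x := mul_nonneg (inv_nonneg.2 hu.le) hx.1.le
  have hx_div_le : 0 ≤ 1 - u⁻¹ * x := by
    rw [sub_nonneg, inv_mul_le_iff₀ hu, mul_one]
    exact hx.2
  calc u ^ r * u ^ s * ((1 - u⁻¹ * x) ^ r * (u⁻¹ * x) ^ s)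
      = (u ^ r * (1 - u⁻¹ * x) ^ r) * (u ^ s * (u⁻¹ * x) ^ s) := by ring
    _ = (u * (1 - u⁻¹ * x)) ^ r * (u * (u⁻¹ * x)) ^ s := by
      rw [Real.mul_rpow hu.le hx_div_le, Real.mul_rpow hu.le hx_div]
    _ = (u - x) ^ r * x ^ s := by rw [mul_sub, mul_inv_cancel_left₀ hu.ne', mul_one]

lemma integral_sub_rpow_mul_rpow (hr : -1 < r) (hs : -1 < s) (hu : 0 < u) :
    ∫ x in (0 : ℝ)..u, (u - x) ^ r * x ^ s =
      Real.Gamma (r + 1) * Real.Gamma (s + 1) * (Real.Gamma (r + s + 1 + 1))⁻¹ *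
        u ^ (r + s + 1) := by
  have hbeta := Complex.betaIntegral_scaled ((s + 1 : ℝ) : ℂ) ((r + 1 : ℝ) : ℂ) hu
  rw [Complex.betaIntegral_eq_Gamma_mul_div _ _ (by rw [Complex.ofReal_re]; linarith)
    (by rw [Complex.ofReal_re]; linarith)] at hbeta
  have hintegrand : ∫ x in (0 : ℝ)..u, (x : ℂ) ^ (((s + 1 : ℝ) : ℂ) - 1) *
        ((u : ℂ) - x) ^ (((r + 1 : ℝ) : ℂ) - 1) =
      ((∫ x in (0 : ℝ)..u, (u - x) ^ r * x ^ s : ℝ) : ℂ) := by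
    rw [← intervalIntegral.integral_ofReal]
    refine intervalIntegral.integral_congr fun x hx ↦ ?_
    rw [Set.uIcc_of_le hu.le] at hx
    exact (ofReal_sub_rpow_mul_rpow hx.1 hx.2 r s).symm
  rw [hintegrand, ← Complex.ofReal_add, Complex.Gamma_ofReal, Complex.Gamma_ofReal,
    Complex.Gamma_ofReal, ← Complex.ofReal_one, ← Complex.ofReal_sub,
    ← Complex.ofReal_cpow hu.le] at hbeta
  norm_cast at hbeta
  rw [hbeta, show s + 1 + (r + 1) = r + s + 1 + 1 by ring, add_sub_cancel_right]
  ring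

end Beta

lemma mul_inv_Gamma_add_one (s : ℝ) : s * (Real.Gamma (s + 1))⁻¹ = (Real.Gamma s)⁻¹ := by
  rcases eq_or_ne s 0 with rfl | hs
  · rw [Real.Gamma_zero, inv_zero, zero_mul]
  · rw [Real.Gamma_add_one hs, mul_inv, mul_inv_cancel_left₀ hs]

-- At the poles of `Γ` the junk value `Γ = 0` gives `Γ⁻¹` its correct value `0`.
lemma descPochhammer_eval_mul_inv_Gamma (r : ℝ) (n : ℕ) :
    (descPochhammer ℝ n).eval r * (Real.Gamma (r + 1))⁻¹ = (Real.Gamma (r - n + 1))⁻¹ := by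
  induction n with
  | zero => simp
  | succ n ih =>
    calc (descPochhammer ℝ (n + 1)).eval r * (Real.Gamma (r + 1))⁻¹
        = (r - n) * ((descPochhammer ℝ n).eval r * (Real.Gamma (r + 1))⁻¹) := by
          rw [descPochhammer_succ_eval]
          ring
      _ = (Real.Gamma (r - n))⁻¹ := by rw [ih, mul_inv_Gamma_add_one]
      _ = (Real.Gamma (r - (n + 1 : ℕ) + 1))⁻¹ := by
          rw [Nat.cast_succ, sub_add_eq_sub_sub, sub_add_cancel]

lemma iteratedDeriv_inv_Gamma_mul_rpow (r x : ℝ) (n : ℕ) :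
    iteratedDeriv n (fun u : ℝ ↦ (Real.Gamma (r + 1))⁻¹ * u ^ r) x =
      (Real.Gamma (r - n + 1))⁻¹ * x ^ (r - n) := by
  rw [iteratedDeriv_const_mul_field, iteratedDeriv_eq_iterate, Real.iter_deriv_rpow_const,
    ← descPochhammer_eval_mul_inv_Gamma]
  ring

/-- `f` has Riemann–Liouville derivative `f'` of order `α` at `t`, in analogy with `HasDerivAt`.
The convergence and smoothness of the fractional integral near `t`, which `rlDeriv` itself does not
record, make the notion stable under linear combinations. -/
structure HasRLDerivAt (α : ℝ) (l : ℕ) (f : ℝ → ℝ) (f' t : ℝ) : Prop where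
  eventually_intervalIntegrable : ∀ᶠ u in 𝓝 t,
    IntervalIntegrable (fun τ ↦ (u - τ) ^ ((l : ℝ) - α - 1) * f τ) volume 0 u
  contDiffAt : ContDiffAt ℝ l (fun u ↦ ∫ τ in (0 : ℝ)..u, (u - τ) ^ ((l : ℝ) - α - 1) * f τ) t
  rlDeriv_eq : rlDeriv α l f t = f'

section FractionalDerivative

variable {α t : ℝ} {l : ℕ}

lemma HasRLDerivAt.const_mul {f : ℝ → ℝ} {f' : ℝ} (c : ℝ) (hf : HasRLDerivAt α l f f' t) :
    HasRLDerivAt α l (fun τ ↦ c * f τ) (c * f') t where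
  eventually_intervalIntegrable := by
    simpa only [mul_left_comm _ c] using
      hf.eventually_intervalIntegrable.mono fun _ hu ↦ hu.const_mul c
  contDiffAt := by
    simpa only [mul_left_comm _ c, intervalIntegral.integral_const_mul] using
      contDiffAt_const.mul hf.contDiffAt
  rlDeriv_eq := by
    rw [← hf.rlDeriv_eq]
    simp only [rlDeriv, mul_left_comm _ c, intervalIntegral.integral_const_mul,
      iteratedDeriv_const_mul_field]

lemma HasRLDerivAt.sum {ι : Type*} {S : Finset ι} {f : ι → ℝ → ℝ} {f' : ι → ℝ}
    (hf : ∀ i ∈ S, HasRLDerivAt α l (f i) (f' i) t) :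
    HasRLDerivAt α l (fun τ ↦ ∑ i ∈ S, f i τ) (∑ i ∈ S, f' i) t := by
  have hint : ∀ᶠ u in 𝓝 t, ∀ i ∈ S,
      IntervalIntegrable (fun τ ↦ (u - τ) ^ ((l : ℝ) - α - 1) * f i τ) volume 0 u :=
    (Finset.eventually_all S).2 fun i hi ↦ (hf i hi).eventually_intervalIntegrable
  have hsum : (fun u ↦ ∫ τ in (0 : ℝ)..u, (u - τ) ^ ((l : ℝ) - α - 1) * ∑ i ∈ S, f i τ) =ᶠ[𝓝 t]
      fun u ↦ ∑ i ∈ S, ∫ τ in (0 : ℝ)..u, (u - τ) ^ ((l : ℝ) - α - 1) * f i τ := by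
    filter_upwards [hint] with u hu
    simp only [Finset.mul_sum]
    exact intervalIntegral.integral_finsetSum hu
  refine ⟨?_, ?_, ?_⟩
  · filter_upwards [hint] with u hu
    simpa only [Finset.mul_sum, Finset.sum_fn] using IntervalIntegrable.sum S hu
  · exact (ContDiffAt.sum fun i hi ↦ (hf i hi).contDiffAt).congr_of_eventuallyEq hsum
  · rw [rlDeriv, hsum.iteratedDeriv_eq, iteratedDeriv_fun_sum fun i hi ↦ (hf i hi).contDiffAt,
      Finset.mul_sum]
    exact Finset.sum_congr rfl fun i hi ↦ (hf i hi).rlDeriv_eq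

lemma hasRLDerivAt_rpow {p : ℝ} (hα : α < l) (hp : -1 < p) (ht : 0 < t) :
    HasRLDerivAt α l (fun τ ↦ τ ^ p)
      (Real.Gamma (p + 1) / Real.Gamma (p + 1 - α) * t ^ (p - α)) t := by
  have hexp : -1 < (l : ℝ) - α - 1 := by linarith
  have hGamma : Real.Gamma (l - α) ≠ 0 := (Real.Gamma_pos_of_pos (sub_pos.2 hα)).ne'
  have hbeta : (fun u ↦ ∫ τ in (0 : ℝ)..u, (u - τ) ^ ((l : ℝ) - α - 1) * τ ^ p) =ᶠ[𝓝 t]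
      fun u ↦ Real.Gamma (l - α) * Real.Gamma (p + 1) *
        ((Real.Gamma (l - α + p + 1))⁻¹ * u ^ (l - α + p)) := by
    filter_upwards [lt_mem_nhds ht] with u hu
    rw [integral_sub_rpow_mul_rpow hexp hp hu, sub_add_cancel, sub_add_eq_add_sub, sub_add_cancel,
      mul_assoc]
  refine ⟨?_, ?_, ?_⟩
  · filter_upwards [lt_mem_nhds ht] with u hu
    exact intervalIntegrable_sub_rpow_mul_rpow hexp hp hu
  · exact ContDiffAt.congr_of_eventuallyEq (contDiffAt_const.mul
      (contDiffAt_const.mul (Real.contDiffAt_rpow_const_of_ne ht.ne'))) hbeta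
  · rw [rlDeriv, hbeta.iteratedDeriv_eq, iteratedDeriv_const_mul_field,
      iteratedDeriv_inv_Gamma_mul_rpow, show (l : ℝ) - α + p - l = p - α by ring,
      sub_add_eq_add_sub]
    field_simp

lemma hasRLDerivAt_pow (hα : α < l) (ht : 0 < t) (k : ℕ) :
    HasRLDerivAt α l (fun τ ↦ τ ^ k)
      (Real.Gamma (k + 1) / Real.Gamma (k + 1 - α) * t ^ ((k : ℝ) - α)) t := by
  simpa only [Real.rpow_natCast] using
    hasRLDerivAt_rpow hα (neg_one_lt_zero.trans_le k.cast_nonneg) ht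

end FractionalDerivative

/-- The coefficient `c_{μ,κ,i,j,m}` of `t ^ (i - m)` in the binomial expansion of the `j`-th summand
of the Jacobi polynomial `P_i`. -/
noncomputable def jacobiCoeff (μ κ : ℝ) (i j m : ℕ) : ℝ :=
  (-1) ^ m * genBinom (i + μ) j * genBinom (i + κ) (i - j) * (i - j).choose m

lemma jacobiP_eq_sum_jacobiCoeff_mul_pow (μ κ : ℝ) (i : ℕ) (t : ℝ) :
    jacobiP μ κ i t = ∑ j ∈ Finset.range (i + 1), ∑ m ∈ Finset.range (i - j + 1),
      jacobiCoeff μ κ i j m * t ^ (i - m) := by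
  refine Finset.sum_congr rfl fun j hj ↦ ?_
  rw [sub_eq_neg_add, add_pow, Finset.mul_sum, Finset.sum_mul]
  refine Finset.sum_congr rfl fun m hm ↦ ?_
  rw [Finset.mem_range] at hj hm
  rw [show i - m = (i - j - m) + j by omega, pow_add, jacobiCoeff]
  ring

lemma hasRLDerivAt_jacobiP {α t : ℝ} {l : ℕ} (hα : α < l) (ht : 0 < t) (μ κ : ℝ) (i : ℕ) :
    HasRLDerivAt α l (jacobiP μ κ i) (qPoly μ κ α i t) t := by
  rw [funext (jacobiP_eq_sum_jacobiCoeff_mul_pow μ κ i)]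
  refine HasRLDerivAt.sum fun j _ ↦ HasRLDerivAt.sum fun m hm ↦ ?_
  rw [Finset.mem_range] at hm
  have hpow := (hasRLDerivAt_pow hα ht (i - m)).const_mul (jacobiCoeff μ κ i j m)
  rwa [Nat.cast_sub (by omega), ← mul_assoc] at hpow

lemma continuous_jacobiP (μ κ : ℝ) (i : ℕ) : Continuous (jacobiP μ κ i) := by
  unfold jacobiP
  fun_prop

lemma intervalIntegrable_jacobiWeight_mul {μ κ : ℝ} {f : ℝ → ℝ} (hμ : -1 < μ) (hκ : -1 < κ)
    (hf : ContinuousOn f (Set.Icc 0 1)) :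
    IntervalIntegrable (fun τ ↦ jacobiWeight μ κ τ * f τ) volume 0 1 :=
  (intervalIntegrable_one_sub_rpow_mul_rpow hμ hκ).mul_continuousOn
    (by rwa [Set.uIcc_of_le zero_le_one])

lemma integral_jacobiKernel_mul {μ κ : ℝ} {f : ℝ → ℝ}
    (hf : IntervalIntegrable (fun τ ↦ jacobiWeight μ κ τ * f τ) volume 0 1)
    (α : ℝ) (N : ℕ) (t : ℝ) :
    ∫ τ in (0 : ℝ)..1, jacobiKernel μ κ α N τ t * f τ =
      ∑ i ∈ Finset.range (N + 1),
        scalarProd μ κ (jacobiP μ κ i) f / normSq μ κ (jacobiP μ κ i) * qPoly μ κ α i t := by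
  have hterm (i : ℕ) :
      IntervalIntegrable (fun τ ↦ jacobiWeight μ κ τ * jacobiP μ κ i τ * f τ) volume 0 1 := by
    simpa only [mul_right_comm] using hf.mul_continuousOn (continuous_jacobiP μ κ i).continuousOn
  calc ∫ τ in (0 : ℝ)..1, jacobiKernel μ κ α N τ t * f τ
      = ∫ τ in (0 : ℝ)..1, ∑ i ∈ Finset.range (N + 1),
          jacobiWeight μ κ τ * jacobiP μ κ i τ * f τ *
            (qPoly μ κ α i t / normSq μ κ (jacobiP μ κ i)) := by
        congr! 2 with τ
        rw [jacobiKernel, Finset.sum_mul]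
        exact Finset.sum_congr rfl fun i _ ↦ by ring
    _ = ∑ i ∈ Finset.range (N + 1), scalarProd μ κ (jacobiP μ κ i) f *
          (qPoly μ κ α i t / normSq μ κ (jacobiP μ κ i)) := by
        rw [intervalIntegral.integral_finsetSum fun i _ ↦ (hterm i).mul_const _]
        simp only [intervalIntegral.integral_mul_const, scalarProd]
    _ = _ := Finset.sum_congr rfl fun i _ ↦ by ring

lemma continuousOn_comp_add_sub_mul {a b : ℝ} (hab : a ≤ b) {y : ℝ → ℝ}
    (hy : ContinuousOn y (Set.Icc a b)) :
    ContinuousOn (fun τ ↦ y (a + (b - a) * τ)) (Set.Icc 0 1) := by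
  refine hy.comp (by fun_prop) fun τ hτ ↦ ⟨?_, ?_⟩
  · nlinarith [hτ.1]
  · nlinarith [hτ.2]

theorem stmt8_general {μ κ α t : ℝ} {l : ℕ} {f : ℝ → ℝ} (_hμ : -1 < μ) (_hκ : -1 < κ)
    (hα : α < l) (ht : 0 < t)
    (hf : IntervalIntegrable (fun τ ↦ jacobiWeight μ κ τ * f τ) volume 0 1) (N : ℕ) :
    rlDeriv α l
        (fun s ↦ ∑ i ∈ Finset.range (N + 1),
          scalarProd μ κ (jacobiP μ κ i) f / normSq μ κ (jacobiP μ κ i) * jacobiP μ κ i s) t =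
      ∫ τ in (0 : ℝ)..1, jacobiKernel μ κ α N τ t * f τ := by
  rw [integral_jacobiKernel_mul hf]
  exact (HasRLDerivAt.sum fun i _ ↦ (hasRLDerivAt_jacobiP hα ht μ κ i).const_mul _).rlDeriv_eq

theorem stmt8 (a b : ℝ) (hab : a < b) (h : ℝ) (hh : h = b - a)
    (y : ℝ → ℝ) (hy : ContinuousOn y (Set.Icc a b))
    (N : ℕ) (μ κ : ℝ) (hμ : -1 < μ) (hκ : -1 < κ)
    (α : ℝ) (hα : 0 ≤ α) (l : ℕ) (hl : 1 ≤ l) (hα1 : (l : ℝ) - 1 ≤ α) (hα2 : α < l)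
    (t : ℝ) (ht : t ∈ Set.Ioc (0:ℝ) 1) :
    h ^ (-α) *
      rlDeriv α l
        (fun s => ∑ i ∈ Finset.range (N + 1),
          (scalarProd μ κ (jacobiP μ κ i) (fun τ => y (a + h * τ)) /
              normSq μ κ (jacobiP μ κ i)) * jacobiP μ κ i s) t =
    h ^ (-α) * ∫ τ in (0:ℝ)..1, jacobiKernel μ κ α N τ t * y (a + h * τ) := by
  subst hh
  rw [stmt8_general hμ hκ hα2 ht.1
    (intervalIntegrable_jacobiWeight_mul hμ hκ (continuousOn_comp_add_sub_mul hab.le hy))]
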